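/- Let i₀ = dim(R/I). Then: (i) e_i(R[It]) = 0 for all i with i₀ ≤ i ≤ d−2, and (ii) e_{d−1}(R[It]) = e(R). -/

import Mathlib

/-! For a fixed `n ≥ 1`, the Hilbert function of `R ⧸ I ^ n` is `dim R_m - dim (Iⁿ)_m`, and
`R ⧸ I ^ n` has the same dimension `i₀` as `R ⧸ I`. The main input is that the partial sums over
`m < M` of this Hilbert function are `O(M ^ i₀)` (`exists_sum_quotHilb_le`), which follows from
Noether normalization (`exists_growth_bound`).

For large `m`, `P(m, n) - P(m, n')` is the difference of the Hilbert functions of `R ⧸ I ^ n'` and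
`R ⧸ I ^ n`. A polynomial dominated by a sequence with partial sums `O(M ^ i₀)` has degree less than
`i₀` (`coeff_eq_zero_of_sum_le`), so for `i ≥ i₀` the coefficient of `m ^ i` in `P(m, n)` does not
depend on `n`. Hence no monomial `m ^ i n ^ j` with `i ≥ i₀` and `j > 0` occurs in `P`, and for
`i ≤ d - 2` this includes the one whose coefficient is a multiple of `e_i`.

For `i = d - 1`, divide `dim R_m - P(m, n)` by `m ^ (d - 1)`: the quotient converges to the difference
`(e(R) - e_{d-1}) / (d - 1)!`. It is nonnegative, and if it were positive the partial sums of the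
Hilbert function of `R ⧸ I ^ n` would grow like `M ^ d`, whereas `i₀ < d` because `I ≠ 0` and `R` is a
domain. -/
open Filter Polynomial MeasureTheory

noncomputable section DensityDefs

variable (k : Type*) [Field k] {R : Type*} [CommRing R] [Algebra k R]

/-- The degree-`m` homogeneous component of an ideal `I` of a graded algebra,
as a `k`-subspace of `R`. -/
def idealComp (𝒜 : ℕ → Submodule k R) (I : Ideal R) (m : ℕ) : Submodule k R :=
  (Submodule.restrictScalars k I) ⊓ 𝒜 m

/-- `ℓ_k((I)_m)`, the `k`-dimension of the degree-`m` component of `I`. -/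
def compLen (𝒜 : ℕ → Submodule k R) (I : Ideal R) (m : ℕ) : ℕ :=
  Module.finrank k (idealComp k 𝒜 I m)

/-- The adic density function `f_{{Iⁿ}}(x) = limsup_n d!·ℓ_k((Iⁿ)_{⌊xn⌋})/n^(d-1)`. -/
def adicDensity (𝒜 : ℕ → Submodule k R) (I : Ideal R) (d : ℕ) (x : ℝ) : ℝ :=
  Filter.limsup (fun n : ℕ =>
    (Nat.factorial d : ℝ) * (compLen k 𝒜 (I ^ n) (⌊x * (n : ℝ)⌋₊)) / (n : ℝ) ^ (d - 1))
    Filter.atTop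

/-- `I` can be generated by homogeneous elements of degree at most `D`. -/
def GeneratedInDegLE (𝒜 : ℕ → Submodule k R) (I : Ideal R) (D : ℕ) : Prop :=
  ∃ s : Set R, I = Ideal.span s ∧ ∀ r ∈ s, ∃ i ≤ D, r ∈ 𝒜 i

/-- The standard graded hypotheses: `R₀ = k·1`, `R` is generated in degree one, and
the degree-one piece is finitely generated (so `R` is a finitely generated `k`-algebra). -/
def IsStandardGraded (𝒜 : ℕ → Submodule k R) : Prop :=
  𝒜 0 = Submodule.span k {(1 : R)} ∧ (∀ n : ℕ, 𝒜 (n + 1) = 𝒜 1 * 𝒜 n) ∧ (𝒜 1).FG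

/-- `r` satisfies an equation of integral dependence over the ideal `I`:
`r^n + a₁ r^(n-1) + ⋯ + aₙ = 0` with `aᵢ ∈ Iⁱ`. -/
def IsIntOverIdeal {R : Type*} [CommRing R] (I : Ideal R) (r : R) : Prop :=
  ∃ n : ℕ, 0 < n ∧ ∃ a : ℕ → R, (∀ i, 1 ≤ i → i ≤ n → a i ∈ I ^ i) ∧
    r ^ n + ∑ i ∈ Finset.Icc 1 n, a i * r ^ (n - i) = 0

/-- The integral closure `Ī` of an ideal `I` (the set of elements integral over `I`
is an ideal, so taking the span does not change the set). -/
def intCl {R : Type*} [CommRing R] (I : Ideal R) : Ideal R :=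
  Ideal.span {r | IsIntOverIdeal I r}

/-- The height of an ideal: the infimum of the heights of the primes containing it. -/
def idealHeight {R : Type*} [CommRing R] (I : Ideal R) : ℕ∞ :=
  ⨅ p ∈ {p : PrimeSpectrum R | I ≤ p.asIdeal}, Order.height p

/-- The saturation `I :_R M^∞ = ⋃_t (I :_R M^t)`. -/
def satIdeal {R : Type*} [CommRing R] (I M : Ideal R) : Ideal R :=
  ⨆ t : ℕ, Submodule.colon (I : Submodule R R) ((M ^ t : Ideal R) : Submodule R R)

/-- The saturation density function `f_{{Ĩⁿ}}(x) = limsup_n d!·ℓ_k((Iⁿ:M^∞)_{⌊xn⌋})/n^(d-1)`. -/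
def satDensity (𝒜 : ℕ → Submodule k R) (I M : Ideal R) (d : ℕ) (x : ℝ) : ℝ :=
  Filter.limsup (fun n : ℕ =>
    (Nat.factorial d : ℝ) * (compLen k 𝒜 (satIdeal (I ^ n) M) (⌊x * (n : ℝ)⌋₊)) /
      (n : ℝ) ^ (d - 1)) Filter.atTop

/-- The `k`-dimension of the quotient `A/B` of two `k`-subspaces.  For ideals `B ⊆ A`
of a standard graded `k`-algebra whose quotient has finite length, this agrees with the
length `ℓ_R(A/B)`, since the residue field at the irrelevant maximal ideal is `k`. -/
def quotDim {R : Type*} [CommRing R] [Algebra k R] (A B : Submodule k R) : ℕ :=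
  Module.finrank k (↥A ⧸ Submodule.comap A.subtype B)

/-- The epsilon multiplicity `ε(I) = limsup_n d!·ℓ((Iⁿ : M^∞)/Iⁿ)/n^d`. -/
def epsMult {R : Type*} [CommRing R] [Algebra k R] (I M : Ideal R) (d : ℕ) : ℝ :=
  Filter.limsup (fun n : ℕ =>
    (Nat.factorial d : ℝ) *
      (quotDim k (Submodule.restrictScalars k (satIdeal (I ^ n) M))
        (Submodule.restrictScalars k (I ^ n))) / (n : ℝ) ^ d) Filter.atTop

/-- The integers `e i` are the RA-multiplicities of `I` (in dimension `d`, with `D` a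
bound for the generating degrees of `I`): for `m ≥ D·n + m₀` and `n ≥ n₀` the length
`ℓ_k((Iⁿ)_m)` agrees with a numerical polynomial of total degree `d-1` whose
top-degree homogeneous part is `Σᵢ (e i)/(i!(d-1-i)!)·mⁱ·n^(d-1-i)`. -/
def HasRAMult (𝒜 : ℕ → Submodule k R) (I : Ideal R) (d D : ℕ) (e : ℕ → ℤ) : Prop :=
  ∃ (a : ℕ → ℕ → ℚ) (m₀ n₀ : ℕ),
    (∀ i j, d - 1 < i + j → a i j = 0) ∧
    (∀ i, i ≤ d - 1 →
      a i (d - 1 - i) = (e i : ℚ) / ((Nat.factorial i : ℚ) * (Nat.factorial (d - 1 - i) : ℚ))) ∧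
    (∀ m n : ℕ, n₀ ≤ n → D * n + m₀ ≤ m →
      (compLen k 𝒜 (I ^ n) m : ℚ) =
        ∑ i ∈ Finset.range d, ∑ j ∈ Finset.range d, a i j * (m : ℚ) ^ i * (n : ℚ) ^ j)

/-- `L` is the Hilbert–Samuel multiplicity of the `(c,1)`-diagonal subalgebra
`R[It]_{Δ(c,1)} = ⊕ₙ (Iⁿ)_{cn}`, i.e. `L = lim_n (d-1)!·ℓ_k((Iⁿ)_{cn})/n^(d-1)`. -/
def HasDiagMult (𝒜 : ℕ → Submodule k R) (I : Ideal R) (d c : ℕ) (L : ℝ) : Prop :=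
  Filter.Tendsto (fun n : ℕ =>
    (Nat.factorial (d - 1) : ℝ) * (compLen k 𝒜 (I ^ n) (c * n)) / (n : ℝ) ^ (d - 1))
    Filter.atTop (nhds L)

/-- The degree-`s` homogeneous component of `S = R[Y]` where `Y` has degree `1`:
polynomials `p` with `p.coeff t ∈ 𝒜 (s - t)` for `t ≤ s` and `p.coeff t = 0` for `t > s`. -/
def polyGrade (𝒜 : ℕ → Submodule k R) (s : ℕ) : Submodule k (Polynomial R) :=
  ⨅ t : ℕ, Submodule.comap ((Polynomial.lcoeff R t).restrictScalars k)
    (if t ≤ s then 𝒜 (s - t) else ⊥)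

/-- `ℓ_k((𝖨ⁿ)_s)` where `𝖨 = IS ⊆ S = R[Y]`. -/
def polyCompLen (𝒜 : ℕ → Submodule k R) (I : Ideal R) (n s : ℕ) : ℕ :=
  Module.finrank k
    ↥((Submodule.restrictScalars k ((Ideal.map (Polynomial.C : R →+* Polynomial R) I) ^ n)) ⊓
      polyGrade k 𝒜 s)

/-- `L` is the Hilbert–Samuel multiplicity of the `(c,1)`-diagonal subalgebra
`S[𝖨t]_{Δ(c,1)} = ⊕ₙ (𝖨ⁿ)_{cn}` of the Rees algebra over `S = R[Y]`,
i.e. `L = lim_n d!·ℓ_k((𝖨ⁿ)_{cn})/n^d`. -/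
def HasPolyDiagMult (𝒜 : ℕ → Submodule k R) (I : Ideal R) (d c : ℕ) (L : ℝ) : Prop :=
  Filter.Tendsto (fun n : ℕ =>
    (Nat.factorial d : ℝ) * (polyCompLen k 𝒜 I n (c * n)) / (n : ℝ) ^ d)
    Filter.atTop (nhds L)

/-- The integers `em i` are the mixed multiplicities `e_i(M|a)` of the pair `(M, a)`
in a ring `T` of dimension `e`: for `u, v ≫ 0`, `ℓ_T(M^u a^v / M^(u+1) a^v)` agrees with
a numerical polynomial of total degree `e-1` whose top-degree homogeneous part is
`Σᵢ (em i)/(i!(e-1-i)!)·u^(e-1-i)·vⁱ`.  (Lengths are recorded as `k`-dimensions, which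
agree with `ℓ_T` since the residue field is `k`.) -/
def HasMixedMult {T : Type*} [CommRing T] [Algebra k T] (M a : Ideal T) (e : ℕ)
    (em : ℕ → ℤ) : Prop :=
  ∃ (c : ℕ → ℕ → ℚ) (u₀ v₀ : ℕ),
    (∀ i j, e - 1 < i + j → c i j = 0) ∧
    (∀ i, i ≤ e - 1 →
      c (e - 1 - i) i = (em i : ℚ) / ((Nat.factorial i : ℚ) * (Nat.factorial (e - 1 - i) : ℚ))) ∧
    (∀ u v : ℕ, u₀ ≤ u → v₀ ≤ v →
      (quotDim k (Submodule.restrictScalars k ((M ^ u * a ^ v : Ideal T) : Submodule T T))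
          (Submodule.restrictScalars k ((M ^ (u + 1) * a ^ v : Ideal T) : Submodule T T)) : ℚ) =
        ∑ i ∈ Finset.range e, ∑ j ∈ Finset.range e, c i j * (u : ℚ) ^ i * (v : ℚ) ^ j)

end DensityDefs

/-! ### Dimension and growth of filtrations -/

/-- Lying over and going up lift every chain of primes of `S` to a chain of the same length in `T`. -/
theorem ringKrullDim_le_of_integral_injective {S T : Type*} [CommRing S] [CommRing T] [Algebra S T]
    [Algebra.IsIntegral S T] (hinj : Function.Injective (algebraMap S T)) :
    ringKrullDim S ≤ ringKrullDim T := by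
  have : FaithfulSMul S T := (faithfulSMul_iff_algebraMap_injective S T).2 hinj
  refine iSup_le fun l => ?_
  obtain ⟨Q, -, hQ, hQo⟩ :=
    Ideal.exists_ideal_over_prime_of_isIntegral l.head.asIdeal (⊥ : Ideal T) (by
      rw [Ideal.comap_bot_of_injective _ hinj]; exact bot_le)
  have : Q.LiesOver l.head.asIdeal := ⟨hQo.symm⟩
  obtain ⟨L, hL, -, -⟩ := Ideal.exists_ltSeries_of_hasGoingUp l Q
  rw [← hL]
  exact Order.LTSeries.length_le_krullDim L

theorem finrank_mul_le {k A : Type*} [Field k] [CommRing A] [Algebra k A] (U V : Submodule k A)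
    [Module.Finite k U] [Module.Finite k V] :
    Module.finrank k ↥(U * V) ≤ Module.finrank k U * Module.finrank k V := by
  rw [← Submodule.mulMap_range, ← Module.finrank_tensorProduct]
  exact LinearMap.finrank_range_le _

theorem restrictDegree_finite_finrank (k : Type*) [Field k] (s N : ℕ) :
    Module.Finite k (MvPolynomial.restrictDegree (Fin s) k N) ∧
    Module.finrank k (MvPolynomial.restrictDegree (Fin s) k N) ≤ (N + 1) ^ s := by
  let f : {n : Fin s →₀ ℕ | ∀ i, n i ≤ N} → (Fin s → Fin (N + 1)) :=
    fun n i => ⟨n.1 i, Nat.lt_succ_of_le (n.2 i)⟩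
  have hf : Function.Injective f := by
    intro a b h
    ext i
    exact congrArg Fin.val (congrFun h i)
  have : Finite {n : Fin s →₀ ℕ | ∀ i, n i ≤ N} := Finite.of_injective f hf
  have b := MvPolynomial.basisRestrictSupport k {n : Fin s →₀ ℕ | ∀ i, n i ≤ N}
  refine ⟨Module.Finite.of_basis b, ?_⟩
  have h := Module.finrank_eq_nat_card_basis b
  change Module.finrank k (MvPolynomial.restrictDegree (Fin s) k N) = _ at h
  rw [h]
  simpa using Nat.card_le_card_of_injective f hf

theorem restrictDegree_mul_le (k : Type*) [Field k] (s N M : ℕ) :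
    MvPolynomial.restrictDegree (Fin s) k N * MvPolynomial.restrictDegree (Fin s) k M ≤
      MvPolynomial.restrictDegree (Fin s) k (N + M) := by
  unfold MvPolynomial.restrictDegree
  rw [← MvPolynomial.restrictSupport_add]
  refine MvPolynomial.restrictSupport_mono _ ?_
  rintro _ ⟨a, ha, b, hb, rfl⟩ i
  exact add_le_add (ha i) (hb i)

/-- For a finitely generated `k`-algebra `A` of dimension `i₀` and a finite-dimensional subspace `V₁`,
the powers `V₁ ^ M` lie in an increasing family of subspaces of dimension `O(M ^ i₀)`.
By Noether normalization `A` is finite over a polynomial ring in `s ≤ i₀` variables. With `V` the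
span of module generators and `U N` the image of the polynomials of degree at most `N` in each
variable, `V₁ * V ⊆ U E * V` for some `E`, so `V₁ ^ M ⊆ U (E * M + c) * V` by induction. -/
theorem exists_growth_bound {k A : Type*} [Field k] [CommRing A] [Algebra k A] [Nontrivial A]
    [Algebra.FiniteType k A] {i₀ : ℕ} (hdim : ringKrullDim A = (i₀ : WithBot ℕ∞))
    (V₁ : Submodule k A) (hV₁ : V₁.FG) :
    ∃ (F : ℕ → Submodule k A) (C : ℕ), Monotone F ∧ (∀ M, V₁ ^ M ≤ F M) ∧
      (∀ M, Module.Finite k (F M)) ∧ ∀ M, Module.finrank k (F M) ≤ C * (M + 1) ^ i₀ := by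
  obtain ⟨s, g, hinj, hfin⟩ := exists_finite_inj_algHom_of_fg k A
  replace hfin : g.toRingHom.Finite := hfin
  have hs : s ≤ i₀ := by
    algebraize [g.toRingHom]
    have h1 := ringKrullDim_le_of_integral_injective (S := MvPolynomial (Fin s) k) (T := A) hinj
    rw [hdim, MvPolynomial.ringKrullDim_of_isNoetherianRing, ringKrullDim_eq_zero_of_field] at h1
    simpa using h1
  obtain ⟨B, hB⟩ : ∃ B : Finset A, ∀ a : A, ∃ c : A → MvPolynomial (Fin s) k,
      a = ∑ b ∈ B, g (c b) * b := by
    algebraize [g.toRingHom]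
    obtain ⟨B, hB⟩ := (Module.Finite.fg_top : (⊤ : Submodule (MvPolynomial (Fin s) k) A).FG)
    refine ⟨B, fun a => ?_⟩
    have ha : a ∈ Submodule.span (MvPolynomial (Fin s) k) (B : Set A) := hB ▸ Submodule.mem_top
    rw [Submodule.mem_span_finset] at ha
    obtain ⟨c, -, hc⟩ := ha
    exact ⟨c, hc.symm.trans (Finset.sum_congr rfl fun b _ => Algebra.smul_def _ _)⟩
  let U : ℕ → Submodule k A := fun N =>
    (MvPolynomial.restrictDegree (Fin s) k N).map g.toLinearMap
  let V : Submodule k A := Submodule.span k (B : Set A)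
  have hVfg : V.FG := ⟨B, rfl⟩
  have hUmono : Monotone U := fun a b hab => Submodule.map_mono <|
    MvPolynomial.restrictSupport_mono _ fun n hn i => (hn i).trans hab
  have hUfin : ∀ N, Module.Finite k (U N) := fun N => by
    have := (restrictDegree_finite_finrank k s N).1
    infer_instance
  have hUrank : ∀ N, Module.finrank k (U N) ≤ (N + 1) ^ s := fun N => by
    have := (restrictDegree_finite_finrank k s N).1
    exact (Submodule.finrank_map_le _ _).trans (restrictDegree_finite_finrank k s N).2
  have hUmul : ∀ N M, U N * U M ≤ U (N + M) := fun N M => by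
    have := restrictDegree_mul_le k s N M
    change Submodule.map _ _ * Submodule.map _ _ ≤ _
    rw [← Submodule.map_mul]
    exact Submodule.map_mono this
  have hUVmono : Monotone fun N => U N * V := fun a b hab => mul_le_mul' (hUmono hab) le_rfl
  have hcover : ∀ a : A, ∃ N, a ∈ U N * V := by
    intro a
    obtain ⟨c, hc⟩ := hB a
    refine ⟨B.sup fun b => (c b).totalDegree, ?_⟩
    rw [hc]
    refine Submodule.sum_mem _ fun b hb => Submodule.mul_mem_mul ⟨c b, ?_, rfl⟩
      (Submodule.subset_span hb)
    refine MvPolynomial.restrictTotalDegree_le_restrictDegree _ _ _ ?_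
    rw [MvPolynomial.mem_restrictTotalDegree]
    exact Finset.le_sup (f := fun b => (c b).totalDegree) hb
  have hfg : ∀ W : Submodule k A, W.FG → ∃ N, W ≤ U N * V := by
    rintro W ⟨S, rfl⟩
    choose n hn using hcover
    exact ⟨S.sup n, Submodule.span_le.2 fun a ha => hUVmono (Finset.le_sup ha) (hn a)⟩
  obtain ⟨E, hE⟩ := hfg (V₁ * V) (hV₁.mul hVfg)
  obtain ⟨c, hc⟩ := hcover 1
  have hfinV : Module.Finite k V := Module.Finite.of_fg hVfg
  refine ⟨fun M => U (E * M + c) * V, Module.finrank k V * (E + c + 1) ^ s, ?_, ?_, ?_, ?_⟩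
  · intro a b hab
    exact hUVmono (by gcongr)
  · intro M
    induction M with
    | zero =>
      rw [pow_zero]
      exact Submodule.one_le.2 (by simpa using hc)
    | succ M ih =>
      calc V₁ ^ (M + 1) = V₁ * V₁ ^ M := pow_succ' _ _
        _ ≤ V₁ * (U (E * M + c) * V) := mul_le_mul' le_rfl ih
        _ = U (E * M + c) * (V₁ * V) := by ac_rfl
        _ ≤ U (E * M + c) * (U E * V) := mul_le_mul' le_rfl hE
        _ = (U (E * M + c) * U E) * V := (mul_assoc _ _ _).symm
        _ ≤ U (E * M + c + E) * V := mul_le_mul' (hUmul _ _) le_rfl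
        _ = U (E * (M + 1) + c) * V := by congr 2; ring
  · intro M
    have := hUfin (E * M + c)
    exact Module.Finite.of_fg (((Module.Finite.iff_fg).1 this).mul hVfg)
  · intro M
    have := hUfin (E * M + c)
    calc Module.finrank k ↥(U (E * M + c) * V) ≤ (E * M + c + 1) ^ s * Module.finrank k V :=
          (finrank_mul_le _ _).trans (Nat.mul_le_mul_right _ (hUrank _))
      _ ≤ ((E + c + 1) * (M + 1)) ^ s * Module.finrank k V := by
          gcongr
          nlinarith [Nat.zero_le (c * M), Nat.zero_le M]
      _ = Module.finrank k V * (E + c + 1) ^ s * (M + 1) ^ s := by rw [mul_pow]; ring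
      _ ≤ _ := by gcongr; omega

/-! ### Hilbert functions of quotients of a standard graded algebra -/

section Grading

variable {k : Type*} [Field k] {R : Type*} [CommRing R] [Algebra k R]
  {𝒜 : ℕ → Submodule k R}

theorem IsStandardGraded.pow_one_eq (hSG : IsStandardGraded k 𝒜) (j : ℕ) : 𝒜 1 ^ j = 𝒜 j := by
  induction j with
  | zero => rw [pow_zero, hSG.1, Submodule.one_eq_span]
  | succ j ih => rw [pow_succ', ih, ← hSG.2.1]

theorem IsStandardGraded.finite_comp (hSG : IsStandardGraded k 𝒜) (j : ℕ) :
    Module.Finite k (𝒜 j) := by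
  rw [Module.Finite.iff_fg, ← hSG.pow_one_eq]
  exact hSG.2.2.pow j

theorem IsStandardGraded.finiteType [GradedAlgebra 𝒜] (hSG : IsStandardGraded k 𝒜) :
    Algebra.FiniteType k R := by
  obtain ⟨S, hS⟩ := hSG.2.2
  refine ⟨⟨S, ?_⟩⟩
  have h1 : 𝒜 1 ≤ Subalgebra.toSubmodule (Algebra.adjoin k (S : Set R)) := by
    rw [← hS]
    exact Algebra.span_le_adjoin k _
  have h2 : ∀ j, 𝒜 j ≤ Subalgebra.toSubmodule (Algebra.adjoin k (S : Set R)) := by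
    intro j
    induction j with
    | zero =>
      rw [hSG.1, ← Submodule.one_eq_span]
      exact Submodule.one_le.2 (one_mem (Algebra.adjoin k (S : Set R)))
    | succ j ih =>
      rw [hSG.2.1]
      exact (mul_le_mul' h1 ih).trans (Subalgebra.mul_toSubmodule_le _ _ |>.trans (by simp))
  have h3 : (⊤ : Submodule k R) ≤ Subalgebra.toSubmodule (Algebra.adjoin k (S : Set R)) := by
    rw [← (DirectSum.Decomposition.isInternal 𝒜).submodule_iSup_eq_top]
    exact iSup_le h2
  exact top_le_iff.1 h3

/-- The Hilbert function of `R ⧸ J`, for a homogeneous ideal `J`: the dimension of the image of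
`𝒜 j` in `R ⧸ J`. -/
noncomputable def quotHilb (𝒜 : ℕ → Submodule k R) (J : Ideal R) (j : ℕ) : ℕ :=
  Module.finrank k ((𝒜 j).map (Ideal.Quotient.mkₐ k J).toLinearMap)

theorem quotHilb_add_compLen (hfin : ∀ j, Module.Finite k (𝒜 j)) (J : Ideal R) (j : ℕ) :
    quotHilb 𝒜 J j + compLen k 𝒜 J j = Module.finrank k (𝒜 j) := by
  have := hfin j
  have h := LinearMap.finrank_range_add_finrank_ker
    ((Ideal.Quotient.mkₐ k J).toLinearMap.domRestrict (𝒜 j))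
  rw [LinearMap.range_domRestrict] at h
  rw [← h, quotHilb, compLen]
  congr 1
  have e : idealComp k 𝒜 J j = (LinearMap.ker
      ((Ideal.Quotient.mkₐ k J).toLinearMap.domRestrict (𝒜 j))).map (𝒜 j).subtype := by
    ext x
    simp [idealComp, Ideal.Quotient.eq_zero_iff_mem, and_comm]
  rw [e]
  exact Submodule.finrank_map_subtype_eq (𝒜 j) _

/-- As `J` is homogeneous, the images of the graded pieces in `R ⧸ J` are independent, so the partial
sums of the Hilbert function are the dimensions of the sums of these images. -/
theorem finrank_iSup_map_eq_sum [GradedAlgebra 𝒜] (hfin : ∀ j, Module.Finite k (𝒜 j))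
    {J : Ideal R} (hJ : J.IsHomogeneous 𝒜) (M : ℕ) :
    Module.finrank k ↥(⨆ j ∈ Finset.range M, (𝒜 j).map (Ideal.Quotient.mkₐ k J).toLinearMap) =
      ∑ j ∈ Finset.range M, quotHilb 𝒜 J j := by
  induction M with
  | zero =>
    rw [Finset.range_zero, Finset.sum_empty, iSup₂_eq_bot.2 (by simp), finrank_bot]
  | succ M ih =>
    rw [Finset.range_add_one, Finset.iSup_insert, Finset.sum_insert (by simp), ← ih]
    have f2 := Submodule.finite_finset_sup (Finset.range M)
      fun j => (𝒜 j).map (Ideal.Quotient.mkₐ k J).toLinearMap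
    rw [Finset.sup_eq_iSup] at f2
    have h := Submodule.finrank_sup_add_finrank_inf_eq
      ((𝒜 M).map (Ideal.Quotient.mkₐ k J).toLinearMap)
      (⨆ j ∈ Finset.range M, (𝒜 j).map (Ideal.Quotient.mkₐ k J).toLinearMap)
    rw [quotHilb, ← h]
    suffices hb : (𝒜 M).map (Ideal.Quotient.mkₐ k J).toLinearMap ⊓
        (⨆ j ∈ Finset.range M, (𝒜 j).map (Ideal.Quotient.mkₐ k J).toLinearMap) = ⊥ by
      rw [hb]; simp
    rw [eq_bot_iff]
    rintro _ ⟨⟨a, ha, rfl⟩, hx⟩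
    simp only [← Submodule.map_iSup] at hx
    obtain ⟨w, hw, hwa⟩ := hx
    have hmem : a - w ∈ J := by
      rw [← Ideal.Quotient.eq]
      exact hwa.symm
    have hw0 : GradedAlgebra.proj 𝒜 M w = 0 := by
      have : (⨆ j ∈ Finset.range M, 𝒜 j) ≤ LinearMap.ker (GradedAlgebra.proj 𝒜 M) := by
        refine iSup₂_le fun j hj x hx => ?_
        rw [LinearMap.mem_ker, GradedAlgebra.proj_apply]
        exact DirectSum.decompose_of_mem_ne 𝒜 hx (Finset.mem_range.1 hj).ne
      exact this hw
    have haM : GradedAlgebra.proj 𝒜 M a = a := by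
      rw [GradedAlgebra.proj_apply]
      exact DirectSum.decompose_of_mem_same 𝒜 ha
    have := hJ M hmem
    rw [← GradedAlgebra.proj_apply, map_sub, hw0, haM, sub_zero] at this
    exact Ideal.Quotient.eq_zero_iff_mem.2 this

/-- The sum of the Hilbert function of `R ⧸ J` over degrees below `M` is `O(M ^ dim (R ⧸ J))`. -/
theorem exists_sum_quotHilb_le [GradedAlgebra 𝒜] (hSG : IsStandardGraded k 𝒜)
    {J : Ideal R} (hJ : J.IsHomogeneous 𝒜) {i₀ : ℕ}
    (hdim : ringKrullDim (R ⧸ J) = (i₀ : WithBot ℕ∞)) :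
    ∃ C : ℕ, ∀ M, 0 < M → ∑ j ∈ Finset.range M, quotHilb 𝒜 J j ≤ C * M ^ i₀ := by
  have := hSG.finiteType
  have : Nontrivial (R ⧸ J) := by
    by_contra h
    rw [not_nontrivial_iff_subsingleton] at h
    rw [ringKrullDim_eq_bot_of_subsingleton] at hdim
    exact absurd hdim.symm (WithBot.natCast_ne_bot _)
  -- the image of `𝒜 j` is the `j`-th power of the image of `𝒜 1`
  obtain ⟨F, C, hmono, hF, hfin, hrank⟩ := exists_growth_bound hdim
    ((𝒜 1).map (Ideal.Quotient.mkₐ k J).toLinearMap) (hSG.2.2.map _)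
  refine ⟨C, fun M hM => ?_⟩
  obtain ⟨M, rfl⟩ := Nat.exists_eq_succ_of_ne_zero hM.ne'
  rw [← finrank_iSup_map_eq_sum hSG.finite_comp hJ]
  have := hfin M
  refine (Submodule.finrank_mono (iSup₂_le fun j hj => ?_)).trans (hrank M)
  refine le_trans ?_ ((hF j).trans (hmono (Finset.mem_range_succ_iff.1 hj)))
  rw [← Submodule.map_pow, hSG.pow_one_eq]

theorem isHomogeneous_pow [GradedAlgebra 𝒜] {I : Ideal R} (hI : I.IsHomogeneous 𝒜) (n : ℕ) :
    (I ^ n).IsHomogeneous 𝒜 := by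
  induction n with
  | zero => simpa using Ideal.IsHomogeneous.top 𝒜
  | succ n ih => rw [pow_succ]; exact Ideal.IsHomogeneous.mul ih hI

theorem ringKrullDim_quotient_pow (I : Ideal R) {n : ℕ} (hn : n ≠ 0) :
    ringKrullDim (R ⧸ I ^ n) = ringKrullDim (R ⧸ I) := by
  rw [ringKrullDim_quotient, ringKrullDim_quotient, PrimeSpectrum.zeroLocus_pow I hn]

theorem ne_bot_of_idealHeight_pos [IsDomain R] {I : Ideal R} (h : 0 < idealHeight I) : I ≠ ⊥ := by
  rintro rfl
  refine h.not_ge ((iInf₂_le (⊥ : PrimeSpectrum R) bot_le).trans ?_)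
  simp

theorem dim_quotient_lt [IsDomain R] {d i₀ : ℕ} (hdim : ringKrullDim R = (d : WithBot ℕ∞))
    {I : Ideal R} (hI : I ≠ ⊥) (hi₀ : ringKrullDim (R ⧸ I) = (i₀ : WithBot ℕ∞)) : i₀ + 1 ≤ d := by
  obtain ⟨x, hx, hx0⟩ := Submodule.exists_mem_ne_zero_of_ne_bot hI
  have := ringKrullDim_succ_le_of_surjective (Ideal.Quotient.mk I) Ideal.Quotient.mk_surjective
    (mem_nonZeroDivisors_of_ne_zero hx0) (Ideal.Quotient.eq_zero_iff_mem.2 hx)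
  rw [hdim, hi₀] at this
  exact_mod_cast this

end Grading

/-! ### Growth of sequences and polynomials -/

/-- A nonnegative sequence whose partial sums are `O(M ^ i)` cannot eventually dominate `c * j ^ e`
with `c > 0` and `e ≥ i`, since the partial sums of the latter grow like `M ^ (e + 1)`. -/
theorem not_eventually_le_of_sum_le {h : ℕ → ℝ} (h0 : ∀ j, 0 ≤ h j) {C : ℝ} {i e : ℕ}
    (hie : i ≤ e) (hC : ∀ M : ℕ, 0 < M → ∑ j ∈ Finset.range M, h j ≤ C * (M : ℝ) ^ i)
    {c : ℝ} (hc : 0 < c) : ¬ ∀ᶠ j : ℕ in atTop, c * (j : ℝ) ^ e ≤ h j := by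
  intro hev
  obtain ⟨J, hJ⟩ := eventually_atTop.1 hev
  have hC0 : 0 ≤ C := by
    have := hC 1 one_pos
    have h1 := h0 0
    simp at this
    exact h1.trans this
  obtain ⟨N₀, hN₀⟩ := exists_nat_gt (C * 2 ^ i / c)
  set N := max (max J N₀) 1 with hN
  have hN1 : 1 ≤ N := le_max_right _ _
  have hNJ : J ≤ N := (le_max_left _ _).trans (le_max_left _ _)
  have hNN : C * 2 ^ i / c < N := hN₀.trans_le (by
    exact_mod_cast (le_max_right _ _).trans (le_max_left _ _))
  have hN1' : (1 : ℝ) ≤ N := by exact_mod_cast hN1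
  -- the terms with `N ≤ j < 2N` already contribute `c * N ^ (e + 1)`
  have lower : c * (N : ℝ) ^ (e + 1) ≤ ∑ j ∈ Finset.range (2 * N), h j := by
    calc c * (N : ℝ) ^ (e + 1) = ∑ _j ∈ Finset.Ico N (2 * N), c * (N : ℝ) ^ e := by
          rw [Finset.sum_const, Nat.card_Ico, nsmul_eq_mul, two_mul, Nat.add_sub_cancel]; ring
      _ ≤ ∑ j ∈ Finset.Ico N (2 * N), h j := by
          refine Finset.sum_le_sum fun j hj => ?_
          have hj' := (Finset.mem_Ico.1 hj).1
          refine le_trans ?_ (hJ j (hNJ.trans hj'))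
          gcongr
      _ ≤ _ := by
          refine Finset.sum_le_sum_of_subset_of_nonneg (fun j hj => ?_) fun j _ _ => h0 j
          exact Finset.mem_range.2 (Finset.mem_Ico.1 hj).2
  have upper := hC (2 * N) (by omega)
  have h3 : C * ((2 * N : ℕ) : ℝ) ^ i ≤ C * 2 ^ i * (N : ℝ) ^ e := by
    push_cast
    rw [mul_pow, ← mul_assoc]
    gcongr
  have h4 : c * N * (N : ℝ) ^ e ≤ C * 2 ^ i * (N : ℝ) ^ e := by
    calc c * N * (N : ℝ) ^ e = c * (N : ℝ) ^ (e + 1) := by ring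
      _ ≤ _ := lower.trans (upper.trans h3)
  have h5 := le_of_mul_le_mul_right h4 (by positivity)
  rw [div_lt_iff₀ hc] at hNN
  linarith

/-- The limit is also correct (namely `0`) when `p` has degree smaller than `m`. -/
theorem tendsto_eval_div_pow (p : ℝ[X]) {m : ℕ} (hp : p.natDegree ≤ m) :
    Tendsto (fun j : ℕ => p.eval (j : ℝ) / (j : ℝ) ^ m) atTop (nhds (p.coeff m)) := by
  suffices h : Tendsto (fun x : ℝ => p.eval x / (X ^ m : ℝ[X]).eval x) atTop (nhds (p.coeff m)) by
    have := h.comp tendsto_natCast_atTop_atTop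
    simpa [Function.comp_def] using this
  rcases hp.lt_or_eq with hlt | rfl
  · rw [coeff_eq_zero_of_natDegree_lt hlt]
    refine Polynomial.div_tendsto_atTop_zero_of_degree_lt _ _ ?_
    rw [degree_X_pow]
    exact degree_le_natDegree.trans_lt (by exact_mod_cast hlt)
  · rcases eq_or_ne p 0 with rfl | h0
    · simp
    · have := Polynomial.div_tendsto_atTop_leadingCoeff_div_of_degree_eq p (X ^ p.natDegree)
        (by rw [degree_X_pow, degree_eq_natDegree h0])
      simpa using this

/-- A polynomial dominated by a nonnegative sequence with partial sums `O(M ^ i)` has degree less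
than `i`. -/
theorem coeff_eq_zero_of_sum_le {h : ℕ → ℝ} (h0 : ∀ j, 0 ≤ h j) {C : ℝ} {i : ℕ}
    (hC : ∀ M : ℕ, 0 < M → ∑ j ∈ Finset.range M, h j ≤ C * (M : ℝ) ^ i)
    (q : ℝ[X]) (hq : ∀ᶠ j : ℕ in atTop, |q.eval (j : ℝ)| ≤ h j) {m : ℕ} (him : i ≤ m) :
    q.coeff m = 0 := by
  by_contra hne
  have hq0 : q ≠ 0 := by rintro rfl; simp at hne
  have hdeg : m ≤ q.natDegree := le_natDegree_of_ne_zero hne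
  have hl : 0 < |q.leadingCoeff| := abs_pos.2 (leadingCoeff_ne_zero.2 hq0)
  refine not_eventually_le_of_sum_le h0 (him.trans hdeg) hC (half_pos hl) ?_
  have ht := (tendsto_eval_div_pow q le_rfl).abs
  have hev := ht.eventually_const_lt (u := |q.leadingCoeff| / 2) (half_lt_self hl)
  filter_upwards [hev, hq, eventually_gt_atTop 0] with j h1 h2 h3
  have h4 : (0 : ℝ) < (j : ℝ) ^ q.natDegree := by positivity
  rw [abs_div, abs_of_pos h4, lt_div_iff₀ h4] at h1
  exact h1.le.trans h2

/-- A polynomial expression in `n` that is constant for all large `n` has no coefficients of positive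
degree. -/
theorem coeff_y_eq_zero_of_const {N n₁ : ℕ} (b : ℕ → ℝ) (c : ℝ)
    (h : ∀ n : ℕ, n₁ ≤ n → ∑ j ∈ Finset.range N, b j * (n : ℝ) ^ j = c) {j : ℕ} (hj : j ≠ 0)
    (hjN : j < N) : b j = 0 := by
  let r : ℝ[X] := ∑ j ∈ Finset.range N, C (b j) * X ^ j - C c
  have hr : r = 0 := by
    refine eq_zero_of_infinite_isRoot r ?_
    refine ((Set.Ici_infinite n₁).image (f := fun n : ℕ => (n : ℝ))
      Nat.cast_injective.injOn).mono ?_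
    rintro _ ⟨n, hn, rfl⟩
    simp [r, eval_finsetSum, h n hn]
  have := congrArg (fun p => p.coeff j) hr
  simpa [r, finsetSum_coeff, coeff_C, hj, coeff_X_pow, hjN] using this

/-- Let `i₀ = dim(R/I)` and let `eI` be the RA-multiplicities of
`I` and `eR = e(R)` the Hilbert–Samuel multiplicity of `R`.  Then `eI i = 0` for all
`i₀ ≤ i ≤ d-2`, and `eI (d-1) = e(R)`. -/
theorem statement10
    (k : Type*) [Field k] (R : Type*) [CommRing R] [IsDomain R] [IsNoetherianRing R]
    [Algebra k R] (𝒜 : ℕ → Submodule k R) [GradedAlgebra 𝒜]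
    (hSG : IsStandardGraded k 𝒜)
    (d : ℕ) (hd : 2 ≤ d) (hdim : ringKrullDim R = (d : WithBot ℕ∞))
    (I : Ideal R) (hIhom : I.IsHomogeneous 𝒜)
    (hht0 : 0 < idealHeight I) (hhtI : idealHeight I < (d : ℕ∞))
    (D : ℕ) (hDI : GeneratedInDegLE k 𝒜 I D)
    (i₀ : ℕ) (hi₀ : ringKrullDim (R ⧸ I) = (i₀ : WithBot ℕ∞))
    (eI : ℕ → ℤ) (heI : HasRAMult k 𝒜 I d D eI)
    (eR : ℝ)
    (heR : Filter.Tendsto (fun n : ℕ =>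
      (Nat.factorial (d - 1) : ℝ) * (Module.finrank k (𝒜 n)) / (n : ℝ) ^ (d - 1))
      Filter.atTop (nhds eR)) :
    (∀ i : ℕ, i₀ ≤ i → i ≤ d - 2 → eI i = 0) ∧ ((eI (d - 1) : ℝ) = eR) := by
  obtain ⟨a, m₀, n₀, hdeg, htop, hP⟩ := heI
  have hid : i₀ + 1 ≤ d := dim_quotient_lt hdim (ne_bot_of_idealHeight_pos hht0) hi₀
  -- the polynomial `P(-, n)` in the variable `m`
  let p : ℕ → ℝ[X] := fun n => ∑ i ∈ Finset.range d,
    C (∑ j ∈ Finset.range d, (a i j : ℝ) * (n : ℝ) ^ j) * X ^ i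
  have hpcoeff : ∀ n i, i < d → (p n).coeff i = ∑ j ∈ Finset.range d, (a i j : ℝ) * (n : ℝ) ^ j := by
    intro n i hi
    simp only [p, finsetSum_coeff, coeff_C_mul_X_pow]
    rw [Finset.sum_ite_eq, if_pos (Finset.mem_range.2 hi)]
  have hpdeg : ∀ n, (p n).natDegree ≤ d - 1 := by
    intro n
    refine natDegree_sum_le_of_forall_le _ _ fun i hi => (natDegree_C_mul_X_pow_le _ _).trans ?_
    have := Finset.mem_range.1 hi
    omega
  have hpeval : ∀ n, n₀ ≤ n → ∀ᶠ m : ℕ in atTop,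
      (p n).eval (m : ℝ) = (Module.finrank k (𝒜 m) : ℝ) - quotHilb 𝒜 (I ^ n) m := by
    intro n hn
    filter_upwards [eventually_ge_atTop (D * n + m₀)] with m hm
    have h1 : (compLen k 𝒜 (I ^ n) m : ℝ) =
        ∑ i ∈ Finset.range d, ∑ j ∈ Finset.range d, (a i j : ℝ) * (m : ℝ) ^ i * (n : ℝ) ^ j := by
      exact_mod_cast hP m n hn hm
    have h2 : (quotHilb 𝒜 (I ^ n) m : ℝ) + compLen k 𝒜 (I ^ n) m = Module.finrank k (𝒜 m) := by
      exact_mod_cast quotHilb_add_compLen hSG.finite_comp (I ^ n) m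
    rw [← h2, add_sub_cancel_left, h1]
    simp only [p, eval_finsetSum, eval_mul, eval_C, eval_pow, eval_X, Finset.sum_mul]
    exact Finset.sum_congr rfl fun i _ => Finset.sum_congr rfl fun j _ => by ring
  have hbound : ∀ n, n ≠ 0 → ∃ C : ℝ, ∀ M : ℕ, 0 < M →
      ∑ j ∈ Finset.range M, (quotHilb 𝒜 (I ^ n) j : ℝ) ≤ C * (M : ℝ) ^ i₀ := by
    intro n hn
    obtain ⟨C, hC⟩ := exists_sum_quotHilb_le hSG (isHomogeneous_pow hIhom n)
      ((ringKrullDim_quotient_pow I hn).trans hi₀)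
    exact ⟨C, fun M hM => by exact_mod_cast hC M hM⟩
  -- `n₁ ≥ 1` because `I ^ 0` is the unit ideal, whose quotient does not have dimension `i₀`
  set n₁ := max n₀ 1 with hn₁
  have hn₁0 : n₁ ≠ 0 := by omega
  obtain ⟨C₁, hC₁⟩ := hbound n₁ hn₁0
  constructor
  · intro i hi hid2
    -- `P(m, n) - P(m, n₁)` is a difference of Hilbert functions of quotients of dimension `i₀`
    have hconst : ∀ n : ℕ, n₁ ≤ n →
        ∑ j ∈ Finset.range d, (a i j : ℝ) * (n : ℝ) ^ j = (p n₁).coeff i := by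
      intro n hn
      obtain ⟨C₂, hC₂⟩ := hbound n (by omega)
      have h := coeff_eq_zero_of_sum_le
        (h := fun j => (quotHilb 𝒜 (I ^ n) j : ℝ) + quotHilb 𝒜 (I ^ n₁) j) (C := C₂ + C₁) (i := i₀)
        (fun j => by positivity)
        (fun M hM => by
          rw [Finset.sum_add_distrib, add_mul]
          exact add_le_add (hC₂ M hM) (hC₁ M hM))
        (p n - p n₁) (by
          filter_upwards [hpeval n (by omega), hpeval n₁ (by omega)] with m h1 h2
          rw [eval_sub, h1, h2, abs_le]
          constructor <;>
          linarith [Nat.cast_nonneg (α := ℝ) (quotHilb 𝒜 (I ^ n) m),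
            Nat.cast_nonneg (α := ℝ) (quotHilb 𝒜 (I ^ n₁) m)]) hi
      rw [← hpcoeff n i (by omega)]
      rw [coeff_sub] at h
      linarith
    have h0 := coeff_y_eq_zero_of_const (fun j => (a i j : ℝ)) _ hconst (j := d - 1 - i)
      (by omega) (by omega)
    have h1 : a i (d - 1 - i) = 0 := by exact_mod_cast h0
    rw [htop i (by omega), div_eq_zero_iff] at h1
    rcases h1 with h1 | h1
    · exact_mod_cast h1
    · exact absurd h1 (by positivity)
  · have hfact : (0 : ℝ) < (Nat.factorial (d - 1) : ℝ) := by positivity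
    have hcoeff : (p n₁).coeff (d - 1) = (eI (d - 1) : ℝ) / (Nat.factorial (d - 1) : ℝ) := by
      rw [hpcoeff n₁ (d - 1) (by omega), Finset.sum_eq_single 0]
      · have := htop (d - 1) le_rfl
        rw [Nat.sub_self] at this
        rw [this]
        simp
      · intro j _ hj
        rw [hdeg _ _ (by omega)]
        simp
      · intro h
        exact absurd (Finset.mem_range.2 (by omega)) h
    have hlim : Tendsto (fun m : ℕ => (quotHilb 𝒜 (I ^ n₁) m : ℝ) / (m : ℝ) ^ (d - 1)) atTop
        (nhds ((Nat.factorial (d - 1) : ℝ)⁻¹ * eR - (p n₁).coeff (d - 1))) := by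
      refine ((heR.const_mul (Nat.factorial (d - 1) : ℝ)⁻¹).sub
        (tendsto_eval_div_pow (p n₁) (hpdeg n₁))).congr' ?_
      filter_upwards [hpeval n₁ (by omega)] with m hm
      rw [hm]
      field_simp
      ring
    have hL0 : 0 ≤ (Nat.factorial (d - 1) : ℝ)⁻¹ * eR - (p n₁).coeff (d - 1) :=
      ge_of_tendsto' hlim fun m => by positivity
    -- a positive limit would make the partial sums grow like `M ^ d`, and `i₀ < d`
    have hL : (Nat.factorial (d - 1) : ℝ)⁻¹ * eR - (p n₁).coeff (d - 1) = 0 := by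
      by_contra hne
      have hpos := lt_of_le_of_ne hL0 (Ne.symm hne)
      refine not_eventually_le_of_sum_le (h := fun j => (quotHilb 𝒜 (I ^ n₁) j : ℝ))
        (fun j => by positivity) (e := d - 1) (by omega) hC₁ (half_pos hpos) ?_
      filter_upwards [hlim.eventually_const_lt (half_lt_self hpos), eventually_gt_atTop 0]
        with m hm h0
      have h4 : (0 : ℝ) < (m : ℝ) ^ (d - 1) := by positivity
      exact ((lt_div_iff₀ h4).1 hm).le
    rw [hcoeff] at hL
    field_simp at hL
    linarith
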